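/- Let T : ℍⁿ ⇉ V₁ be a maximal H-monotone set-valued map with dom(T) = ℍⁿ, and let λ > 0. Then for every v ∈ ℝ²ⁿ, the resolvent value Q_λ(v) = {η ∈ ℍⁿ : v ∈ ξ₁(η) + λT(η)} is a closed subset of ℍⁿ (with respect to d_H) and is unbounded; in fact, for every η ∈ ℍⁿ one has H_η ∩ Q_λ(v) ≠ ∅. -/

import Mathlib

open scoped RealInnerProductSpace Pointwise

noncomputable section

abbrev E (n : ℕ) := EuclideanSpace ℝ (Fin n)
abbrev Heis (n : ℕ) := E n × E n × ℝ
abbrev V1 (n : ℕ) := WithLp 2 (E n × E n)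

/-- The projection ξ₁(x,y,t) = (x,y) onto the first layer V₁ ≅ ℝ²ⁿ. -/
def xi1 {n : ℕ} (η : Heis n) : V1 n := (WithLp.equiv 2 (E n × E n)).symm (η.1, η.2.1)

/-- The horizontal plane through η₀. -/
def Hplane {n : ℕ} (η₀ : Heis n) : Set (Heis n) :=
  {η | η.2.2 = η₀.2.2 + 2 * (⟪η₀.2.1, η.1⟫ - ⟪η₀.1, η.2.1⟫)}

/-- H-monotonicity of a set-valued map T : ℍⁿ ⇉ V₁. -/
def IsHMonotone {n : ℕ} (T : Heis n → Set (V1 n)) : Prop :=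
  ∀ η η', η' ∈ Hplane η → ∀ v ∈ T η, ∀ v' ∈ T η', 0 ≤ ⟪v - v', xi1 η - xi1 η'⟫

/-- Maximal H-monotonicity. -/
def IsMaximalHMonotone {n : ℕ} (T : Heis n → Set (V1 n)) : Prop :=
  IsHMonotone T ∧
    ∀ η v, (∀ η' ∈ Hplane η, ∀ v' ∈ T η', 0 ≤ ⟪v - v', xi1 η - xi1 η'⟫) → v ∈ T η

/-- Heisenberg group law. -/
def hmul {n : ℕ} (η η' : Heis n) : Heis n :=
  (η.1 + η'.1, η.2.1 + η'.2.1,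
    η.2.2 + η'.2.2 + 2 * (⟪η'.1, η.2.1⟫ - ⟪η.1, η'.2.1⟫))

/-- Heisenberg group inverse. -/
def hinv {n : ℕ} (η : Heis n) : Heis n := (-η.1, -η.2.1, -η.2.2)

/-- The Korányi gauge N(x,y,t) = ((‖x‖²+‖y‖²)² + t²)^(1/4). -/
def gaugeN {n : ℕ} (η : Heis n) : ℝ :=
  ((‖η.1‖ ^ 2 + ‖η.2.1‖ ^ 2) ^ 2 + η.2.2 ^ 2) ^ ((1 : ℝ) / 4)

/-- The Korányi–Cygan distance d_H(η,η') = N(η'⁻¹ ∘ η). -/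
def dH {n : ℕ} (η η' : Heis n) : ℝ := gaugeN (hmul (hinv η') η)

/-- The resolventQ Q_λ = (ξ₁ + λT)⁻¹ : V₁ ⇉ ℍⁿ. -/
def resolventQ {n : ℕ} (T : Heis n → Set (V1 n)) (lam : ℝ) (v : V1 n) : Set (Heis n) :=
  {η | ∃ w ∈ T η, v = xi1 η + lam • w}

/-!
Work in the Heisenberg group `V × ℝ` of a symplectic space `V`, where `p ∈ Q_λ(v)` means that
`g p := λ⁻¹ (v - p.1)` belongs to `T p`.

Suppose `g p ∉ T p`. Maximality provides `p'` in the horizontal plane of `p` and `w' ∈ T p'` with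
`⟪g p - w', p.1 - p'.1⟫ < 0`. A point `q` near `p` need not share a horizontal plane with `p'`, but
both share one with a point over a small perturbation, of size `O(c q)` with `c q → 0`, of the
midpoint of `q.1` and `p'.1`. Adding the monotonicity inequalities through that point bounds
`⟪w - w', q.1 - p'.1⟫` below by `O(c q)`, because `T` is locally bounded. Hence
`0 < ⟪w - g q, q.1 - p'.1⟫` for all `q` near `p` and all `w ∈ T q`, and in particular `Q_λ(v)` is
closed. Local boundedness follows in the same way, by comparing `q` and two fixed points with a
common barycentre lying in all three of their planes.

Over a horizontal plane that missed `Q_λ(v)`, every point `x` would thus have a vector `c` with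
`0 < ⟪w - g y, y - c⟫` for all `y` near `x`; the set of admissible `c` is convex, so a partition of
unity makes `c` a `C¹` function of `y`. It has no fixed point and is constant far away, against
Brouwer's theorem, which is proved by the Milnor–Rogers argument: if `r` were a `C¹` retraction
onto a sphere, `s ↦ ∫ det (1 + s (r' - 1))` over the ball would be a polynomial, equal to the volume
for small `s` and to `0` for `s = 1`.
-/

section NoRetraction

open MeasureTheory Metric Filter Topology

theorem exists_polynomial_integral_eval {X : Type*} [MeasurableSpace X] {μ : Measure X}
    {P : X → Polynomial ℝ} {N : ℕ} (hdeg : ∀ x, (P x).natDegree ≤ N)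
    (hint : ∀ s, Integrable (fun x => (P x).eval s) μ) :
    ∃ q : Polynomial ℝ, ∀ s, ∫ x, (P x).eval s ∂μ = q.eval s := by
  let nodes : Finset ℕ := Finset.range (N + 1)
  let basis : ℕ → Polynomial ℝ := Lagrange.basis nodes (Nat.cast : ℕ → ℝ)
  refine ⟨∑ i ∈ nodes, Polynomial.C (∫ x, (P x).eval (i : ℝ) ∂μ) * basis i, fun s => ?_⟩
  have interpolation (x : X) :
      (P x).eval s = ∑ i ∈ nodes, (P x).eval (i : ℝ) * (basis i).eval s := by
    have hlt : (P x).degree < (nodes.card : WithBot ℕ) := by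
      rw [Finset.card_range]
      exact Polynomial.degree_le_natDegree.trans_lt (mod_cast Nat.lt_succ_of_le (hdeg x))
    conv_lhs =>
      rw [Lagrange.eq_interpolate Nat.cast_injective.injOn hlt, Lagrange.interpolate_apply]
    simp only [basis, Polynomial.eval_finsetSum, Polynomial.eval_mul, Polynomial.eval_C]
  calc ∫ x, (P x).eval s ∂μ
      = ∑ i ∈ nodes, ∫ x, (P x).eval (i : ℝ) * (basis i).eval s ∂μ := by
        simp_rw [interpolation]
        exact integral_finsetSum _ fun i _ => (hint i).mul_const _
    _ = _ := by
        simp only [integral_mul_const, Polynomial.eval_finsetSum, Polynomial.eval_mul,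
          Polynomial.eval_C]

section Normed

variable {V : Type*} [NormedAddCommGroup V] [NormedSpace ℝ V]

theorem eventually_det_id_add_pos :
    ∀ᶠ A : V →L[ℝ] V in 𝓝 0, 0 < (ContinuousLinearMap.id ℝ V + A).det := by
  have hcont : Continuous fun A : V →L[ℝ] V => (ContinuousLinearMap.id ℝ V + A).det :=
    ContinuousLinearMap.continuous_det.comp (by fun_prop)
  exact hcont.continuousAt.eventually (lt_mem_nhds (by simp [ContinuousLinearMap.det]))

theorem bijective_add_of_lipschitzWith [CompleteSpace V] {ψ : V → V} {K : NNReal}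
    (hψ : LipschitzWith K ψ) (hK : K < 1) : Function.Bijective fun x => x + ψ x := by
  have happrox : ApproximatesLinearOn (fun x => x + ψ x)
      ((ContinuousLinearEquiv.refl ℝ V : V ≃L[ℝ] V) : V →L[ℝ] V) Set.univ K := by
    refine LipschitzOnWith.approximatesLinearOn (lipschitzOnWith_univ.2 ?_)
    convert hψ using 1
    ext x
    simp
  have hsmall : Subsingleton V ∨ K <
      ‖((ContinuousLinearEquiv.refl ℝ V).symm : V →L[ℝ] V)‖₊⁻¹ := by
    refine (subsingleton_or_nontrivial V).imp_right fun hV => ?_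
    have := EMetric.nontrivial_iff_nontrivialTopology.1 hV
    rwa [show ((ContinuousLinearEquiv.refl ℝ V).symm : V →L[ℝ] V) = .id ℝ V from rfl,
      ContinuousLinearMap.nnnorm_id, inv_one]
  exact ⟨Set.injOn_univ.1 (happrox.injOn hsmall), happrox.surjective hsmall⟩

theorem norm_normalize_sub_normalize_le {a : V} (ha : a ≠ 0) (b : V) :
    ‖NormedSpace.normalize a - NormedSpace.normalize b‖ ≤ 2 / ‖a‖ * ‖a - b‖ := by
  have ha' : 0 < ‖a‖ := norm_pos_iff.2 ha
  have hsplit : NormedSpace.normalize a - NormedSpace.normalize b =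
      ‖a‖⁻¹ • (a - b) + (‖a‖⁻¹ * (‖b‖ - ‖a‖)) • NormedSpace.normalize b := by
    rw [smul_sub, mul_sub, inv_mul_cancel₀ ha'.ne', sub_smul, mul_smul,
      NormedSpace.norm_smul_normalize, one_smul, NormedSpace.normalize]
    abel
  have hunit : ‖NormedSpace.normalize b‖ ≤ 1 := by
    rcases eq_or_ne b 0 with rfl | hb
    · simp
    · exact (NormedSpace.norm_normalize hb).le
  calc ‖NormedSpace.normalize a - NormedSpace.normalize b‖
      ≤ ‖a‖⁻¹ * ‖a - b‖ + ‖a‖⁻¹ * |‖b‖ - ‖a‖| * ‖NormedSpace.normalize b‖ := by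
        rw [hsplit]
        refine (norm_add_le _ _).trans_eq ?_
        simp only [norm_smul, norm_mul, norm_inv, norm_norm, Real.norm_eq_abs (‖b‖ - ‖a‖)]
    _ ≤ ‖a‖⁻¹ * ‖a - b‖ + ‖a‖⁻¹ * ‖a - b‖ * 1 := by
        gcongr
        simpa only [norm_sub_rev a b] using abs_norm_sub_norm_le b a
    _ = 2 / ‖a‖ * ‖a - b‖ := by ring

theorem mem_closedBall_add_smul_sub_iff {r : V → V} {M : ℝ} (hnorm : ∀ x, ‖r x‖ = M)
    (hray : ∀ x, M ≤ ‖x‖ → r x = (M / ‖x‖) • x) {s : ℝ} (hs : s ∈ Set.Ioo (0 : ℝ) 1) (x : V) :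
    x + s • (r x - x) ∈ closedBall 0 M ↔ x ∈ closedBall 0 M := by
  have hconv : x + s • (r x - x) = (1 - s) • x + s • r x := by module
  have hs1 : 0 ≤ 1 - s := by linarith [hs.2]
  rw [mem_closedBall_zero_iff, mem_closedBall_zero_iff, hconv]
  constructor
  · contrapose!
    intro hx
    have hM : 0 ≤ M := hnorm x ▸ norm_nonneg _
    have hx0 : 0 < ‖x‖ := hM.trans_lt hx
    calc M < (1 - s) * ‖x‖ + s * M := by nlinarith [hs.2]
      _ = ((1 - s) + s * (M / ‖x‖)) * ‖x‖ := by field_simp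
      _ = ‖(1 - s) • x + s • r x‖ := by
        rw [hray x hx.le, smul_smul, ← add_smul, norm_smul, Real.norm_of_nonneg]
        have := hs.1
        positivity
  · intro hx
    calc ‖(1 - s) • x + s • r x‖ ≤ ‖(1 - s) • x‖ + ‖s • r x‖ := norm_add_le _ _
      _ = (1 - s) * ‖x‖ + s * M := by
        rw [norm_smul_of_nonneg hs1, norm_smul_of_nonneg hs.1.le, hnorm]
      _ ≤ M := by nlinarith

variable [FiniteDimensional ℝ V]

theorem exists_pos_forall_le_norm {F : V → V} (hF : Continuous F) (hF0 : ∀ y, F y ≠ 0) {M : ℝ}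
    (hM : 0 < M) (hfar : ∀ y, M ≤ ‖y‖ → F y = y) : ∃ δ > 0, ∀ y, δ ≤ ‖F y‖ := by
  obtain ⟨m, -, hm⟩ := (isCompact_closedBall (0 : V) M).exists_isMinOn
    ⟨0, mem_closedBall_self hM.le⟩ hF.norm.continuousOn
  refine ⟨min ‖F m‖ M, lt_min (norm_pos_iff.2 (hF0 m)) hM, fun y => ?_⟩
  rcases le_total ‖y‖ M with hy | hy
  · exact (min_le_left _ _).trans (hm (mem_closedBall_zero_iff.2 hy))
  · exact (min_le_right _ _).trans (by rwa [hfar y hy])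

theorem exists_lipschitzWith_of_eq_self_of_le_norm {F : V → V} (hF : ContDiff ℝ 1 F) {M : ℝ}
    (hfar : ∀ y, M ≤ ‖y‖ → F y = y) : ∃ K, LipschitzWith K F := by
  have hsupp : HasCompactSupport fun y => F y - y :=
    HasCompactSupport.intro (isCompact_closedBall 0 M) fun y hy => by
      rw [mem_closedBall_zero_iff, not_le] at hy
      rw [hfar y hy.le, sub_self]
  obtain ⟨K, hK⟩ := (hF.sub contDiff_id).lipschitzWith_of_hasCompactSupport hsupp one_ne_zero
  exact ⟨K + 1, by simpa using hK.add LipschitzWith.id⟩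

theorem exists_polynomial_det_id_add_smul (A : V →L[ℝ] V) :
    ∃ p : Polynomial ℝ, p.natDegree ≤ Module.finrank ℝ V ∧
      ∀ s : ℝ, (ContinuousLinearMap.id ℝ V + s • A).det = p.eval s := by
  classical
  let b := Module.finBasis ℝ V
  let M := LinearMap.toMatrix b b (A : V →ₗ[ℝ] V)
  refine ⟨((Polynomial.X : Polynomial ℝ) • M.map Polynomial.C +
    (1 : Matrix _ _ ℝ).map Polynomial.C).det, ?_, fun s => ?_⟩
  · simpa using Polynomial.natDegree_det_X_add_C_le M 1
  · rw [ContinuousLinearMap.det, ← LinearMap.det_toMatrix b, ← Polynomial.coe_evalRingHom,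
      RingHom.map_det]
    congr 1
    ext i j
    by_cases h : i = j <;> simp [M, LinearMap.toMatrix_apply, h] <;> ring

variable [MeasurableSpace V] [BorelSpace V] (μ : Measure V) [μ.IsAddHaarMeasure]

theorem integral_det_id_add_fderiv_of_lipschitzWith_lt_one {ψ : V → V} {K : NNReal}
    (hψ : Differentiable ℝ ψ) (hLip : LipschitzWith K ψ) (hK : K < 1)
    (hdet : ∀ x, 0 < (ContinuousLinearMap.id ℝ V + fderiv ℝ ψ x).det)
    {B : Set V} (hB : MeasurableSet B) (hinv : ∀ x, x + ψ x ∈ B ↔ x ∈ B) :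
    ∫ x in B, (ContinuousLinearMap.id ℝ V + fderiv ℝ ψ x).det ∂μ = μ.real B := by
  have hbij := bijective_add_of_lipschitzWith hLip hK
  have himage : (fun x => x + ψ x) '' B = B := by
    conv_lhs => rw [← show (fun x => x + ψ x) ⁻¹' B = B from Set.ext hinv]
    exact Set.image_preimage_eq B hbij.surjective
  have hderiv (x : V) : HasFDerivAt (fun x => x + ψ x)
      (ContinuousLinearMap.id ℝ V + fderiv ℝ ψ x) x :=
    (hasFDerivAt_id x).add (hψ x).hasFDerivAt
  have harea := integral_image_eq_integral_abs_det_fderiv_smul μ hB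
    (fun x _ => (hderiv x).hasFDerivWithinAt) hbij.injective.injOn (fun _ => (1 : ℝ))
  simpa only [himage, fun x => abs_of_pos (hdet x), smul_eq_mul, mul_one, integral_const,
    measureReal_restrict_apply_univ] using harea.symm

theorem integral_det_id_add_fderiv {ψ : V → V} {K : NNReal} (hψ : ContDiff ℝ 1 ψ)
    (hLip : LipschitzWith K ψ) {B : Set V} (hB : IsCompact B)
    (hinv : ∀ s ∈ Set.Ioo (0 : ℝ) 1, ∀ x, x + s • ψ x ∈ B ↔ x ∈ B) :
    ∫ x in B, (ContinuousLinearMap.id ℝ V + fderiv ℝ ψ x).det ∂μ = μ.real B := by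
  choose P hdeg hP using fun x => exists_polynomial_det_id_add_smul (fderiv ℝ ψ x)
  obtain ⟨q, hq⟩ : ∃ q : Polynomial ℝ, ∀ s, ∫ x in B, (P x).eval s ∂μ = q.eval s := by
    refine exists_polynomial_integral_eval hdeg fun s => ?_
    simp only [← hP]
    exact (ContinuousLinearMap.continuous_det.comp (continuous_const.add
      ((hψ.continuous_fderiv one_ne_zero).const_smul s))).continuousOn.integrableOn_compact hB
  have hsmall : ∀ᶠ s : ℝ in 𝓝[>] 0, q.eval s = μ.real B := by
    obtain ⟨ε, hε, hdet⟩ := Metric.eventually_nhds_iff.1 (eventually_det_id_add_pos (V := V))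
    have hsK : ∀ᶠ s : ℝ in 𝓝 0, s < 1 ∧ ‖s‖₊ * K < 1 ∧ ‖s‖ * K < ε := by
      refine (gt_mem_nhds one_pos).and (Eventually.and ?_ ?_)
      · exact (by fun_prop : Continuous fun s : ℝ => ‖s‖₊ * K).continuousAt.eventually
          (gt_mem_nhds (by simp))
      · exact (by fun_prop : Continuous fun s : ℝ => ‖s‖ * K).continuousAt.eventually
          (gt_mem_nhds (by simpa using hε))
    filter_upwards [nhdsWithin_le_nhds hsK, self_mem_nhdsWithin] with s ⟨hs1, hsK1, hsKε⟩ hs0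
    have hψd := hψ.differentiable one_ne_zero
    have hfderiv (x : V) : fderiv ℝ (fun x => s • ψ x) x = s • fderiv ℝ ψ x :=
      fderiv_fun_const_smul (hψd x) s
    have hbound (x : V) : ‖s • fderiv ℝ ψ x‖ ≤ ‖s‖ * K := by
      rw [norm_smul]
      exact mul_le_mul_of_nonneg_left (norm_fderiv_le_of_lipschitz ℝ hLip) (norm_nonneg s)
    simpa only [← hq, ← hP, hfderiv] using integral_det_id_add_fderiv_of_lipschitzWith_lt_one μ
      (ψ := fun x => s • ψ x) (hψd.const_smul s) ((lipschitzWith_smul s).comp hLip) hsK1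
      (fun x => hfderiv x ▸ hdet (by simpa using (hbound x).trans_lt hsKε))
      hB.measurableSet (hinv s ⟨hs0, hs1⟩)
  have hconst : q = Polynomial.C (μ.real B) := by
    obtain ⟨u, hu, hsub⟩ := mem_nhdsGT_iff_exists_Ioo_subset.1 hsmall
    refine Polynomial.eq_of_infinite_eval_eq _ _ ((Set.Ioo_infinite hu).mono fun s hs => ?_)
    simpa using hsub hs
  simpa [← hP, hconst] using hq 1

end Normed

variable {V : Type*} [NormedAddCommGroup V] [InnerProductSpace ℝ V] [FiniteDimensional ℝ V]

theorem det_fderiv_eq_zero_of_norm_eq {r : V → V} {M : ℝ} (hr : Differentiable ℝ r) (hM : M ≠ 0)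
    (hnorm : ∀ x, ‖r x‖ = M) (x : V) : (fderiv ℝ r x).det = 0 := by
  have horth (h : V) : ⟪r x, fderiv ℝ r x h⟫ = 0 := by
    have hconst : (fun y => ⟪r y, r y⟫) = fun _ => M ^ 2 := by
      ext y
      rw [real_inner_self_eq_norm_sq, hnorm]
    have hderiv := fderiv_inner_apply ℝ (hr x) (hr x) h
    rw [hconst, fderiv_const_apply, zero_apply, real_inner_comm (r x)] at hderiv
    linarith
  by_contra hdet
  obtain ⟨h, hh⟩ := (ContinuousLinearMap.toContinuousLinearEquivOfDetNeZero _ hdet).surjective (r x)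
  have hzero : r x = 0 := inner_self_eq_zero.1 ((congrArg (inner ℝ (r x)) hh).symm.trans (horth h))
  exact hM (by rw [← hnorm x, hzero, norm_zero])

theorem not_lipschitzWith_of_norm_eq_of_eq_smul {r : V → V} {M : ℝ} (hM : 0 < M)
    (hr : ContDiff ℝ 1 r) (hnorm : ∀ x, ‖r x‖ = M)
    (hray : ∀ x, M ≤ ‖x‖ → r x = (M / ‖x‖) • x) (K : NNReal) : ¬ LipschitzWith K r := by
  intro hLip
  borelize V
  have hfderiv (x : V) : ContinuousLinearMap.id ℝ V + fderiv ℝ (fun x => r x - x) x =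
      fderiv ℝ r x := by
    rw [fderiv_fun_sub (hr.differentiable one_ne_zero x) differentiableAt_fun_id, fderiv_fun_id]
    abel
  have hvol := integral_det_id_add_fderiv (volume : Measure V) (hr.sub contDiff_id)
    (hLip.sub LipschitzWith.id) (isCompact_closedBall 0 M)
    fun s hs => mem_closedBall_add_smul_sub_iff hnorm hray hs
  simp only [id, hfderiv, integral_zero,
    det_fderiv_eq_zero_of_norm_eq (hr.differentiable one_ne_zero) hM.ne' hnorm] at hvol
  exact (ENNReal.toReal_pos (measure_closedBall_pos volume 0 hM).ne'
    (isCompact_closedBall 0 M).measure_ne_top).ne hvol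

theorem exists_eq_zero_of_eq_self_of_le_norm {F : V → V} (hF : ContDiff ℝ 1 F) {R : ℝ}
    (hfar : ∀ y, R ≤ ‖y‖ → F y = y) : ∃ y, F y = 0 := by
  by_contra! hF0
  let M : ℝ := max R 1
  have hM : 0 < M := zero_lt_one.trans_le (le_max_right R 1)
  have hfarM (y : V) (hy : M ≤ ‖y‖) : F y = y := hfar y ((le_max_left R 1).trans hy)
  obtain ⟨K, hK⟩ := exists_lipschitzWith_of_eq_self_of_le_norm hF hfar
  obtain ⟨δ, hδ, hFδ⟩ := exists_pos_forall_le_norm hF.continuous hF0 hM hfarM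
  let r : V → V := fun y => M • NormedSpace.normalize (F y)
  have hr : ContDiff ℝ 1 r := ((hF.norm ℝ hF0).inv fun y => norm_ne_zero_iff.2 (hF0 y)).smul hF
    |>.const_smul M
  have hnorm (y : V) : ‖r y‖ = M := by
    rw [norm_smul_of_nonneg hM.le, NormedSpace.norm_normalize (hF0 y), mul_one]
  have hray (y : V) (hy : M ≤ ‖y‖) : r y = (M / ‖y‖) • y := by
    simp only [r, hfarM y hy, NormedSpace.normalize, smul_smul, div_eq_mul_inv]
  have hLip : LipschitzWith (M * (2 / δ) * K).toNNReal r := by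
    refine LipschitzWith.of_dist_le_mul fun a b => ?_
    rw [Real.coe_toNNReal _ (by positivity), dist_eq_norm, ← smul_sub, norm_smul_of_nonneg hM.le]
    calc M * ‖NormedSpace.normalize (F a) - NormedSpace.normalize (F b)‖
        ≤ M * (2 / ‖F a‖ * ‖F a - F b‖) := by
          gcongr
          exact norm_normalize_sub_normalize_le (hF0 a) (F b)
      _ ≤ M * (2 / δ * (K * dist a b)) := by
          gcongr
          · exact hFδ a
          · exact dist_eq_norm (F a) (F b) ▸ hK.dist_le_mul a b
      _ = M * (2 / δ) * K * dist a b := by ring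
  exact not_lipschitzWith_of_norm_eq_of_eq_smul hM hr hnorm hray _ hLip

theorem exists_isFixedPt_of_eq_const_of_le_norm {c : V → V} (hc : ContDiff ℝ 1 c) (z : V) {R : ℝ}
    (hfar : ∀ x, R ≤ ‖x - z‖ → c x = z) : ∃ x, Function.IsFixedPt c x := by
  obtain ⟨y, hy⟩ := exists_eq_zero_of_eq_self_of_le_norm
    (F := fun y => y + (z - c (y + z))) (by fun_prop) (R := R) fun y hy => by
      rw [hfar (y + z) (by rwa [add_sub_cancel_right]), sub_self, add_zero]
  exact ⟨y + z, (sub_eq_zero.1 (by rwa [add_sub_assoc])).symm⟩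

end NoRetraction

section Variational

open Filter Topology

variable {V : Type*} [NormedAddCommGroup V] [InnerProductSpace ℝ V] [FiniteDimensional ℝ V]

theorem exists_forall_frequently_exists_inner_nonpos {F : V → Set V} (hF : ∀ x, (F x).Nonempty)
    (z : V) {R : ℝ} (hfar : ∀ x, R ≤ ‖x - z‖ → ∀ w ∈ F x, 0 < ⟪w, x - z⟫) :
    ∃ x, ∀ c, ∃ᶠ y in 𝓝 x, ∃ w ∈ F y, ⟪w, y - c⟫ ≤ 0 := by
  by_contra! hlocal
  let admissible : V → Set V := fun y =>
    {c | (∀ w ∈ F y, 0 < ⟪w, y - c⟫) ∧ (R + 1 ≤ ‖y - z‖ → c = z)}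
  have hconvex (y : V) : Convex ℝ (admissible y) := by
    intro c₁ ⟨hpos₁, hz₁⟩ c₂ ⟨hpos₂, hz₂⟩ a b ha hb hab
    refine ⟨fun w hw => ?_, fun hy => ?_⟩
    · have hsplit : y - (a • c₁ + b • c₂) = a • (y - c₁) + b • (y - c₂) := by
        linear_combination (norm := module) -(hab • y)
      rw [hsplit, inner_add_right, real_inner_smul_right, real_inner_smul_right]
      exact convex_Ioi (0 : ℝ) (hpos₁ w hw) (hpos₂ w hw) ha hb hab
    · rw [hz₁ hy, hz₂ hy, ← add_smul, hab, one_smul]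
  have hselect (x : V) : ∃ c, ∀ᶠ y in 𝓝 x, c ∈ admissible y := by
    have hcont : Continuous fun y : V => ‖y - z‖ := by fun_prop
    rcases lt_or_ge ‖x - z‖ (R + 1) with hx | hx
    · refine (hlocal x).imp fun c hc => ?_
      filter_upwards [hc, hcont.continuousAt.eventually_lt_const hx] with y hy hyR
      exact ⟨hy, fun h => absurd h hyR.not_ge⟩
    · refine ⟨z, ?_⟩
      filter_upwards [hcont.continuousAt.eventually_const_lt ((lt_add_one R).trans_le hx)]
        with y hy
      exact ⟨hfar y hy.le, fun _ => rfl⟩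
  obtain ⟨c, hc⟩ := exists_contMDiffMap_forall_mem_convex_of_local_const
    (modelWithCornersSelf ℝ V) (n := 1) hconvex hselect
  obtain ⟨x, hx⟩ := exists_isFixedPt_of_eq_const_of_le_norm c.contMDiff.contDiff z
    fun x hx => (hc x).2 hx
  obtain ⟨w, hw⟩ := hF x
  simpa [hx.eq] using (hc x).1 w hw

end Variational

section LocalBound

open Filter Topology

variable {V : Type*} [NormedAddCommGroup V] [InnerProductSpace ℝ V]

theorem norm_le_sum_abs_inner {ι : Type*} [Fintype ι] (b : OrthonormalBasis ι ℝ V) (w : V) :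
    ‖w‖ ≤ ∑ i, |⟪w, b i⟫| :=
  calc ‖w‖ = ‖∑ i, ⟪b i, w⟫ • b i‖ := by rw [b.sum_repr']
    _ ≤ ∑ i, |⟪w, b i⟫| := norm_sum_le_of_le _ fun i _ => by
      rw [norm_smul, b.norm_eq_one, mul_one, real_inner_comm, Real.norm_eq_abs]

variable {X : Type*} {l : Filter X} {F : X → Set V}

theorem eventually_inner_le_add_mul_norm {H : X → V} {h : V} {C ε : ℝ} (hH : Tendsto H l (𝓝 h))
    (hC : ∀ᶠ x in l, ∀ w ∈ F x, ⟪w, H x⟫ ≤ C) (hε : 0 < ε) :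
    ∀ᶠ x in l, ∀ w ∈ F x, ⟪w, h⟫ ≤ C + ε * ‖w‖ := by
  filter_upwards [hC, Metric.tendsto_nhds.1 hH ε hε] with x hx hHx w hw
  calc ⟪w, h⟫ = ⟪w, H x⟫ + ⟪w, h - H x⟫ := by rw [← inner_add_right, add_sub_cancel]
    _ ≤ C + ‖w‖ * ‖h - H x‖ := add_le_add (hx w hw) (real_inner_le_norm _ _)
    _ ≤ C + ε * ‖w‖ := by
      rw [mul_comm, ← dist_eq_norm, dist_comm]
      gcongr

theorem exists_eventually_norm_le_of_inner_le [FiniteDimensional ℝ V]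
    (hF : ∀ h : V, ∃ (H : X → V) (C : ℝ), Tendsto H l (𝓝 h) ∧ ∀ᶠ x in l, ∀ w ∈ F x, ⟪w, H x⟫ ≤ C) :
    ∃ K, ∀ᶠ x in l, ∀ w ∈ F x, ‖w‖ ≤ K := by
  let d : ℕ := Module.finrank ℝ V
  let ε : ℝ := 1 / (2 * (d + 1))
  have hcoord (h : V) : ∃ C, ∀ᶠ x in l, ∀ w ∈ F x, ⟪w, h⟫ ≤ C + ε * ‖w‖ := by
    obtain ⟨H, C, hH, hC⟩ := hF h
    exact ⟨C, eventually_inner_le_add_mul_norm hH hC (by positivity)⟩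
  choose C hC using hcoord
  let b := stdOrthonormalBasis ℝ V
  refine ⟨2 * ∑ i, max (C (b i)) (C (-b i)), ?_⟩
  filter_upwards [eventually_all.2 fun i => hC (b i), eventually_all.2 fun i => hC (-b i)]
    with x hpos hneg w hw
  have hsum : ‖w‖ ≤ ∑ i, max (C (b i)) (C (-b i)) + d * (ε * ‖w‖) :=
    calc ‖w‖ ≤ ∑ i, |⟪w, b i⟫| := norm_le_sum_abs_inner b w
      _ ≤ ∑ i, (max (C (b i)) (C (-b i)) + ε * ‖w‖) := by
        refine Finset.sum_le_sum fun i _ => abs_le'.2 ⟨?_, ?_⟩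
        · exact (hpos i w hw).trans (add_le_add_left (le_max_left _ _) _)
        · rw [← inner_neg_right]
          exact (hneg i w hw).trans (add_le_add_left (le_max_right _ _) _)
      _ = _ := by simp [Finset.sum_add_distrib, d]
  have hhalf : d * (ε * ‖w‖) ≤ ‖w‖ / 2 := by
    rw [← mul_assoc, mul_one_div, div_mul_eq_mul_div, div_le_div_iff₀ (by positivity) two_pos]
    linarith [norm_nonneg w]
  linarith

end LocalBound

section SymplecticForm

variable {V : Type*} [NormedAddCommGroup V] [NormedSpace ℝ V]

/-- A symplectic form on a real normed space: an alternating continuous bilinear form which is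
nondegenerate. It makes `V × ℝ` a Heisenberg group with law
`(x, t) ∘ (y, s) = (x + y, t + s + 2 ω y x)`. -/
structure IsSymplectic (ω : V →L[ℝ] V →L[ℝ] ℝ) : Prop where
  self_eq_zero : ∀ x, ω x x = 0
  exists_ne_zero : ∀ x, x ≠ 0 → ∃ y, ω x y ≠ 0

/-- The vertical coordinate of `p⁻¹ ∘ q` in the Heisenberg group `V × ℝ`; it measures how far `q`
is from the horizontal plane through `p`. -/
def verticalGap (ω : V →L[ℝ] V →L[ℝ] ℝ) (p q : V × ℝ) : ℝ := q.2 - p.2 - 2 * ω p.1 q.1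

/-- The horizontal plane through `p` in the Heisenberg group `V × ℝ`. -/
def horizontalPlane (ω : V →L[ℝ] V →L[ℝ] ℝ) (p : V × ℝ) : Set (V × ℝ) :=
  {q | verticalGap ω p q = 0}

/-- The point `p ∘ (y, 0)` of the Heisenberg group `V × ℝ`: the point of the horizontal plane
through `p` with first component `p.1 + y`. -/
def horizontalShift (ω : V →L[ℝ] V →L[ℝ] ℝ) (p : V × ℝ) (y : V) : V × ℝ :=
  (p.1 + y, p.2 + 2 * ω p.1 y)

variable {ω : V →L[ℝ] V →L[ℝ] ℝ}

theorem mem_horizontalPlane {p q : V × ℝ} :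
    q ∈ horizontalPlane ω p ↔ verticalGap ω p q = 0 := Iff.rfl

section Continuity

variable {X : Type*} [TopologicalSpace X]

@[fun_prop]
theorem continuous_verticalGap {f g : X → V × ℝ} (hf : Continuous f) (hg : Continuous g) :
    Continuous fun x => verticalGap ω (f x) (g x) := by
  unfold verticalGap
  fun_prop

@[fun_prop]
theorem continuous_horizontalShift {f : X → V × ℝ} {g : X → V} (hf : Continuous f)
    (hg : Continuous g) : Continuous fun x => horizontalShift ω (f x) (g x) := by
  unfold horizontalShift
  fun_prop

end Continuity

namespace IsSymplectic

theorem neg_swap (hω : IsSymplectic ω) (x y : V) : -ω y x = ω x y := by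
  have h := hω.self_eq_zero (x + y)
  simp only [map_add, add_apply, hω.self_eq_zero, zero_add, add_zero] at h
  linarith

theorem mem_horizontalPlane_comm (hω : IsSymplectic ω) {p q : V × ℝ} :
    q ∈ horizontalPlane ω p ↔ p ∈ horizontalPlane ω q := by
  simp only [mem_horizontalPlane, verticalGap, ← hω.neg_swap q.1 p.1]
  constructor <;> intro h <;> linarith

theorem horizontalShift_mem (hω : IsSymplectic ω) (p : V × ℝ) (y : V) :
    horizontalShift ω p y ∈ horizontalPlane ω p := by
  simp only [mem_horizontalPlane, horizontalShift, verticalGap, map_add, hω.self_eq_zero]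
  ring

theorem verticalGap_horizontalShift (hω : IsSymplectic ω) (p q : V × ℝ) (y : V) :
    verticalGap ω (horizontalShift ω p y) q = verticalGap ω p q + 2 * ω (q.1 - p.1) y := by
  simp only [horizontalShift, verticalGap, map_add, map_sub, add_apply, sub_apply,
    ← hω.neg_swap y q.1]
  ring

theorem verticalGap_horizontalShift_horizontalShift (hω : IsSymplectic ω) (p : V × ℝ) (y z : V) :
    verticalGap ω p (horizontalShift ω (horizontalShift ω p y) z) = 2 * ω y z := by
  simp only [horizontalShift, verticalGap, map_add, add_apply, hω.self_eq_zero]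
  ring

theorem exists_quarter_barycenter (hω : IsSymplectic ω) (p : V × ℝ) {h : V} (hh : h ≠ 0) :
    ∃ z₁ z₂ : V × ℝ, ω (z₁.1 - p.1) (z₂.1 - p.1) ≠ 0 ∧
      verticalGap ω p z₂ = 1 / 4 * (2 * ω (z₁.1 - p.1) (z₂.1 - p.1)) ∧
      -verticalGap ω p z₁ = 1 / 4 * (2 * ω (z₁.1 - p.1) (z₂.1 - p.1)) ∧
      (1 / 4 : ℝ) • (z₁.1 - p.1) + (1 / 4 : ℝ) • (z₂.1 - p.1) = (2 : ℝ) • h := by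
  obtain ⟨k, hk⟩ := hω.exists_ne_zero h hh
  let z : V → V × ℝ := fun y => horizontalShift ω (horizontalShift ω p ((2 : ℝ) • h)) y
  have hz (y : V) : (z y).1 - p.1 = (2 : ℝ) • h + y := by
    simp only [z, horizontalShift]
    abel
  have hgap (y : V) : verticalGap ω p (z y) = 4 * ω h y := by
    rw [hω.verticalGap_horizontalShift_horizontalShift, map_smul, smul_apply, smul_eq_mul]
    ring
  have hform : ω ((z ((2 : ℝ) • h + k)).1 - p.1) ((z ((2 : ℝ) • h - k)).1 - p.1) =
      -(8 * ω h k) := by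
    simp only [hz, map_add, map_sub, map_smul, add_apply, smul_apply, hω.self_eq_zero,
      smul_eq_mul, ← hω.neg_swap k h]
    ring
  refine ⟨z ((2 : ℝ) • h + k), z ((2 : ℝ) • h - k), ?_, ?_, ?_, ?_⟩
  · rw [hform]
    exact neg_ne_zero.2 (mul_ne_zero (by norm_num) hk)
  · rw [hform, hgap, map_sub, map_smul, hω.self_eq_zero, smul_zero]
    ring
  · rw [hform, hgap, map_add, map_smul, hω.self_eq_zero, smul_zero]
    ring
  · rw [hz, hz]
    module

end IsSymplectic

end SymplecticForm

section MonotoneOnPlanes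

open Filter Topology

variable {V : Type*} [NormedAddCommGroup V] [InnerProductSpace ℝ V]

/-- Monotonicity of a set-valued map on the Heisenberg group `V × ℝ`, tested only on pairs of
points lying in a common horizontal plane. -/
def MonotoneOnPlanes (ω : V →L[ℝ] V →L[ℝ] ℝ) (T : V × ℝ → Set V) : Prop :=
  ∀ p q, q ∈ horizontalPlane ω p → ∀ v ∈ T p, ∀ w ∈ T q, 0 ≤ ⟪v - w, p.1 - q.1⟫

/-- Maximality among the set-valued maps that are monotone on horizontal planes. -/
def MaximalMonotoneOnPlanes (ω : V →L[ℝ] V →L[ℝ] ℝ) (T : V × ℝ → Set V) : Prop :=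
  MonotoneOnPlanes ω T ∧
    ∀ p v, (∀ q ∈ horizontalPlane ω p, ∀ w ∈ T q, 0 ≤ ⟪v - w, p.1 - q.1⟫) → v ∈ T p

variable {ω : V →L[ℝ] V →L[ℝ] ℝ} {T : V × ℝ → Set V}

namespace MonotoneOnPlanes

theorem sum_mul_inner_nonneg (hT : MonotoneOnPlanes ω T) {s : V × ℝ} (hs : (T s).Nonempty)
    {ι : Type*} {t : Finset ι} {c : ι → ℝ} {z : ι → V × ℝ} {w : ι → V} (hc : ∀ i ∈ t, 0 ≤ c i)
    (hz : ∀ i ∈ t, s ∈ horizontalPlane ω (z i)) (hw : ∀ i ∈ t, w i ∈ T (z i))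
    (hbary : ∑ i ∈ t, c i • ((z i).1 - s.1) = 0) : 0 ≤ ∑ i ∈ t, c i * ⟪w i, (z i).1 - s.1⟫ := by
  obtain ⟨u, hu⟩ := hs
  calc 0 ≤ ∑ i ∈ t, c i * ⟪w i - u, (z i).1 - s.1⟫ :=
        Finset.sum_nonneg fun i hi => mul_nonneg (hc i hi) (hT _ _ (hz i hi) _ (hw i hi) _ hu)
    _ = ∑ i ∈ t, c i * ⟪w i, (z i).1 - s.1⟫ - ⟪u, ∑ i ∈ t, c i • ((z i).1 - s.1)⟫ := by
        simp only [inner_sub_left, inner_sum, real_inner_smul_right, mul_sub,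
          Finset.sum_sub_distrib]
    _ = ∑ i ∈ t, c i * ⟪w i, (z i).1 - s.1⟫ := by rw [hbary, inner_zero_right, sub_zero]

theorem inner_barycenter_le (hω : IsSymplectic ω) (hT : MonotoneOnPlanes ω T)
    (hdom : ∀ p, (T p).Nonempty) {q z₁ z₂ : V × ℝ} {w w₁ w₂ : V} (hw : w ∈ T q) (hw₁ : w₁ ∈ T z₁)
    (hw₂ : w₂ ∈ T z₂) {a b : ℝ} (ha : 0 ≤ a) (hb : 0 ≤ b) (hab : a + b ≤ 1)
    (haz : 2 * a * ω (z₁.1 - q.1) (z₂.1 - q.1) = verticalGap ω q z₂)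
    (hbz : 2 * b * ω (z₁.1 - q.1) (z₂.1 - q.1) = -verticalGap ω q z₁) {y : V}
    (hy : y = a • (z₁.1 - q.1) + b • (z₂.1 - q.1)) :
    (1 - a - b) * ⟪w, y⟫ ≤ a * ⟪w₁, z₁.1 - q.1 - y⟫ + b * ⟪w₂, z₂.1 - q.1 - y⟫ := by
  have hz₁ : horizontalShift ω q y ∈ horizontalPlane ω z₁ := by
    rw [hω.mem_horizontalPlane_comm, mem_horizontalPlane, hω.verticalGap_horizontalShift, hy]
    simp only [map_add, map_smul, hω.self_eq_zero, smul_eq_mul]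
    linarith
  have hz₂ : horizontalShift ω q y ∈ horizontalPlane ω z₂ := by
    rw [hω.mem_horizontalPlane_comm, mem_horizontalPlane, hω.verticalGap_horizontalShift, hy]
    simp only [map_add, map_smul, hω.self_eq_zero, smul_eq_mul,
      ← hω.neg_swap (z₂.1 - q.1) (z₁.1 - q.1)]
    linarith
  have hsum := hT.sum_mul_inner_nonneg (hdom (horizontalShift ω q y)) (t := Finset.univ)
    (c := ![1 - a - b, a, b]) (z := ![q, z₁, z₂]) (w := ![w, w₁, w₂])
    (by simpa [Fin.forall_fin_succ, ha, hb] using by linarith)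
    (by simpa [Fin.forall_fin_succ, hz₁, hz₂] using hω.horizontalShift_mem q y)
    (by simp [Fin.forall_fin_succ, hw, hw₁, hw₂])
    (by
      simp only [Fin.sum_univ_three, Matrix.cons_val, horizontalShift, hy]
      module)
  simp only [Fin.sum_univ_three, Matrix.cons_val, horizontalShift, ← sub_sub,
    sub_self, zero_sub, inner_neg_right] at hsum
  linarith

theorem exists_tendsto_eventually_inner_le (hω : IsSymplectic ω) (hT : MonotoneOnPlanes ω T)
    (hdom : ∀ p, (T p).Nonempty) (p : V × ℝ) (h : V) :
    ∃ (H : V × ℝ → V) (C : ℝ), Tendsto H (𝓝 p) (𝓝 h) ∧ ∀ᶠ q in 𝓝 p, ∀ w ∈ T q, ⟪w, H q⟫ ≤ C := by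
  rcases eq_or_ne h 0 with rfl | hh
  · exact ⟨fun _ => 0, 0, tendsto_const_nhds, by simp⟩
  obtain ⟨z₁, z₂, hz, hz₂, hz₁, hbary⟩ := hω.exists_quarter_barycenter p hh
  obtain ⟨w₁, hw₁⟩ := hdom z₁
  obtain ⟨w₂, hw₂⟩ := hdom z₂
  let D : V × ℝ → ℝ := fun q => 2 * ω (z₁.1 - q.1) (z₂.1 - q.1)
  let a : V × ℝ → ℝ := fun q => verticalGap ω q z₂ / D q
  let b : V × ℝ → ℝ := fun q => -verticalGap ω q z₁ / D q
  let Y : V × ℝ → V := fun q => a q • (z₁.1 - q.1) + b q • (z₂.1 - q.1)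
  let G : V × ℝ → ℝ := fun q => a q * ⟪w₁, z₁.1 - q.1 - Y q⟫ + b q * ⟪w₂, z₂.1 - q.1 - Y q⟫
  have hDp : D p ≠ 0 := mul_ne_zero two_ne_zero hz
  have hap : a p = 1 / 4 := (div_eq_iff hDp).2 hz₂
  have hbp : b p = 1 / 4 := (div_eq_iff hDp).2 hz₁
  have hD : Continuous D := by fun_prop
  have ha : ContinuousAt a p := ContinuousAt.div₀ (by fun_prop) hD.continuousAt hDp
  have hb : ContinuousAt b p := ContinuousAt.div₀ (by fun_prop) hD.continuousAt hDp
  have hY : ContinuousAt Y p := by fun_prop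
  have hG : ContinuousAt G p := by fun_prop
  refine ⟨fun q => (1 - a q - b q) • Y q, G p + 1, ?_, ?_⟩
  · have hlim : ContinuousAt (fun q => (1 - a q - b q) • Y q) p := by fun_prop
    have hval : (1 - a p - b p) • Y p = h := by
      simp only [Y, hap, hbp, hbary]
      module
    simpa only [hval] using hlim.tendsto
  · filter_upwards [hD.continuousAt.eventually_ne hDp,
      ha.eventually_const_lt (by norm_num [hap] : 0 < a p),
      hb.eventually_const_lt (by norm_num [hbp] : 0 < b p),
      (ha.add hb).eventually_lt_const (by norm_num [hap, hbp] : a p + b p < 1),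
      hG.eventually_lt_const (lt_add_one (G p))] with q hDq haq hbq habq hGq w hw
    rw [real_inner_smul_right]
    refine (hT.inner_barycenter_le hω hdom hw hw₁ hw₂ haq.le hbq.le habq.le ?_ ?_ rfl).trans hGq.le
    · rw [mul_assoc, mul_left_comm]
      exact div_mul_cancel₀ _ hDq
    · rw [mul_assoc, mul_left_comm]
      exact div_mul_cancel₀ _ hDq

theorem exists_eventually_norm_le [FiniteDimensional ℝ V] (hω : IsSymplectic ω)
    (hT : MonotoneOnPlanes ω T) (hdom : ∀ p, (T p).Nonempty) (p : V × ℝ) :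
    ∃ K, ∀ᶠ q in 𝓝 p, ∀ w ∈ T q, ‖w‖ ≤ K :=
  exists_eventually_norm_le_of_inner_le (hT.exists_tendsto_eventually_inner_le hω hdom p)

theorem inner_midpoint_le (hω : IsSymplectic ω) (hT : MonotoneOnPlanes ω T) {q p' : V × ℝ}
    {w w' u e : V} {c : ℝ} (hc : 2 * c * ω (p'.1 - q.1) e = -verticalGap ω q p') (hw : w ∈ T q)
    (hw' : w' ∈ T p') (hu : u ∈ T (horizontalShift ω q ((1 / 2 : ℝ) • (p'.1 - q.1) + c • e))) :
    2 * c * ⟪w + w' - (2 : ℝ) • u, e⟫ ≤ ⟪w - w', q.1 - p'.1⟫ := by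
  have hmem : p' ∈
      horizontalPlane ω (horizontalShift ω q ((1 / 2 : ℝ) • (p'.1 - q.1) + c • e)) := by
    rw [mem_horizontalPlane, hω.verticalGap_horizontalShift]
    simp only [map_add, map_smul, hω.self_eq_zero, smul_eq_mul]
    linarith
  have hq := hT _ _ (hω.horizontalShift_mem q _) w hw u hu
  have hp' := hT _ _ hmem u hu w' hw'
  have hleft : q.1 - (q.1 + ((1 / 2 : ℝ) • (p'.1 - q.1) + c • e)) =
      (1 / 2 : ℝ) • (q.1 - p'.1) - c • e := by module
  have hright : q.1 + ((1 / 2 : ℝ) • (p'.1 - q.1) + c • e) - p'.1 =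
      (1 / 2 : ℝ) • (q.1 - p'.1) + c • e := by module
  simp only [horizontalShift, hleft, hright, inner_sub_left, inner_add_left, inner_sub_right,
    inner_add_right, real_inner_smul_left, real_inner_smul_right] at hq hp' ⊢
  linarith

theorem eventually_neg_lt_inner [FiniteDimensional ℝ V] (hω : IsSymplectic ω)
    (hT : MonotoneOnPlanes ω T) (hdom : ∀ p, (T p).Nonempty) {p p' : V × ℝ}
    (hp' : p' ∈ horizontalPlane ω p) (hne : p'.1 ≠ p.1) {w' : V} (hw' : w' ∈ T p') {ε : ℝ}
    (hε : 0 < ε) : ∀ᶠ q in 𝓝 p, ∀ w ∈ T q, -ε < ⟪w - w', q.1 - p'.1⟫ := by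
  obtain ⟨e, he⟩ := hω.exists_ne_zero _ (sub_ne_zero.2 hne)
  let D : V × ℝ → ℝ := fun q => 2 * ω (p'.1 - q.1) e
  let c : V × ℝ → ℝ := fun q => -verticalGap ω q p' / D q
  let S : V × ℝ → V × ℝ := fun q => horizontalShift ω q ((1 / 2 : ℝ) • (p'.1 - q.1) + c q • e)
  have hDp : D p ≠ 0 := mul_ne_zero two_ne_zero he
  have hcp : c p = 0 := by simp only [c, mem_horizontalPlane.1 hp', neg_zero, zero_div]
  have hD : Continuous D := by fun_prop
  have hc : ContinuousAt c p := ContinuousAt.div₀ (by fun_prop) hD.continuousAt hDp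
  have hS : ContinuousAt S p := by
    unfold S horizontalShift
    fun_prop
  obtain ⟨K₁, hK₁⟩ := hT.exists_eventually_norm_le hω hdom p
  obtain ⟨K₂, hK₂⟩ := hT.exists_eventually_norm_le hω hdom (S p)
  let err : V × ℝ → ℝ := fun q => 2 * |c q| * ((K₁ + ‖w'‖ + 2 * K₂) * ‖e‖)
  have herr : ContinuousAt err p := by fun_prop
  filter_upwards [hD.continuousAt.eventually_ne hDp, hK₁, hS.eventually hK₂,
    herr.eventually_lt_const (by simpa [err, hcp] using hε : err p < ε)]
    with q hDq hwK huK herrq w hw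
  obtain ⟨u, hu⟩ := hdom (S q)
  have hmid := hT.inner_midpoint_le hω (c := c q) (by
    rw [mul_assoc, mul_left_comm]
    exact div_mul_cancel₀ _ hDq) hw hw' hu
  have hnorm : ‖w + w' - (2 : ℝ) • u‖ ≤ K₁ + ‖w'‖ + 2 * K₂ := by
    refine norm_sub_le_of_le (norm_add_le_of_le (hwK w hw) le_rfl) ?_
    rw [norm_smul_of_nonneg two_pos.le]
    exact mul_le_mul_of_nonneg_left (huK u hu) two_pos.le
  have hsmall : |2 * c q * ⟪w + w' - (2 : ℝ) • u, e⟫| ≤ err q := by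
    simp only [err, abs_mul, abs_two]
    gcongr
    exact (abs_real_inner_le_norm _ _).trans (by gcongr)
  linarith [neg_le_of_abs_le hsmall]

theorem eventually_inner_sub_pos [FiniteDimensional ℝ V] (hω : IsSymplectic ω)
    (hT : MonotoneOnPlanes ω T) (hdom : ∀ p, (T p).Nonempty) {p p' : V × ℝ}
    (hp' : p' ∈ horizontalPlane ω p) {w' : V} (hw' : w' ∈ T p') {g : V × ℝ → V}
    (hg : ContinuousAt g p) (hneg : ⟪g p - w', p.1 - p'.1⟫ < 0) :
    ∀ᶠ q in 𝓝 p, ∀ w ∈ T q, 0 < ⟪w - g q, q.1 - p'.1⟫ := by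
  have hne : p'.1 ≠ p.1 := fun h => hneg.ne (by rw [h, sub_self, inner_zero_right])
  obtain ⟨ε, hε, hεneg⟩ := exists_between (neg_pos.2 hneg)
  have hcont : ContinuousAt (fun q => ⟪g q - w', q.1 - p'.1⟫) p := by fun_prop
  filter_upwards [hT.eventually_neg_lt_inner hω hdom hp' hne hw' hε,
    hcont.eventually_lt_const (lt_neg_of_lt_neg hεneg)] with q hq hgq w hw
  calc 0 < ⟪w - w', q.1 - p'.1⟫ - ⟪g q - w', q.1 - p'.1⟫ := by linarith [hq w hw]
    _ = ⟪w - g q, q.1 - p'.1⟫ := by rw [← inner_sub_left, sub_sub_sub_cancel_right]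

end MonotoneOnPlanes

theorem MaximalMonotoneOnPlanes.exists_eventually_inner_sub_pos [FiniteDimensional ℝ V]
    (hω : IsSymplectic ω) (hT : MaximalMonotoneOnPlanes ω T) (hdom : ∀ p, (T p).Nonempty)
    {p : V × ℝ} {g : V × ℝ → V} (hg : ContinuousAt g p) (hp : g p ∉ T p) :
    ∃ c, ∀ᶠ q in 𝓝 p, ∀ w ∈ T q, 0 < ⟪w - g q, q.1 - c⟫ := by
  obtain ⟨p', hp', w', hw', hneg⟩ : ∃ p' ∈ horizontalPlane ω p, ∃ w' ∈ T p',
      ⟪g p - w', p.1 - p'.1⟫ < 0 := by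
    contrapose! hp
    exact hT.2 p (g p) hp
  exact ⟨p'.1, hT.1.eventually_inner_sub_pos hω hdom hp' hw' hg hneg⟩

end MonotoneOnPlanes

section Resolvent

open Filter Topology

/-- The Korányi gauge `(‖x‖⁴ + t²)^(1/4)` on the Heisenberg group `V × ℝ`. -/
def koranyiGauge {V : Type*} [NormedAddCommGroup V] (p : V × ℝ) : ℝ :=
  ((‖p.1‖ ^ 2) ^ 2 + p.2 ^ 2) ^ ((1 : ℝ) / 4)

theorem abs_snd_le_koranyiGauge_sq {V : Type*} [NormedAddCommGroup V] (p : V × ℝ) :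
    |p.2| ≤ koranyiGauge p ^ 2 := by
  have hpow : (koranyiGauge p ^ 2) ^ 2 = (‖p.1‖ ^ 2) ^ 2 + p.2 ^ 2 := by
    rw [koranyiGauge, ← pow_mul, ← Real.rpow_mul_natCast (by positivity)]
    norm_num
  refine abs_le_of_sq_le_sq ?_ (sq_nonneg _)
  rw [hpow]
  exact le_add_of_nonneg_left (by positivity)

variable {V : Type*} [NormedAddCommGroup V] [InnerProductSpace ℝ V]

theorem inner_add_inv_smul_pos {x d : V} {lam : ℝ} (hlam : 0 < lam) (hd : lam * ‖x‖ < ‖d‖) :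
    0 < ⟪x + lam⁻¹ • d, d⟫ := by
  have hd0 : 0 < ‖d‖ := (by positivity : 0 ≤ lam * ‖x‖).trans_lt hd
  calc 0 < lam⁻¹ * ((‖d‖ - lam * ‖x‖) * ‖d‖) :=
        mul_pos (inv_pos.2 hlam) (mul_pos (sub_pos.2 hd) hd0)
    _ = -(‖x‖ * ‖d‖) + lam⁻¹ * ‖d‖ ^ 2 := by
        field_simp
        ring
    _ ≤ ⟪x, d⟫ + lam⁻¹ * ‖d‖ ^ 2 := by
        gcongr
        exact neg_le_of_abs_le (abs_real_inner_le_norm x d)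
    _ = ⟪x + lam⁻¹ • d, d⟫ := by
        rw [inner_add_left, real_inner_smul_left, real_inner_self_eq_norm_sq]

/-- The value at `v` of the resolvent `(ξ₁ + lam T)⁻¹` of a set-valued map on the Heisenberg group
`V × ℝ`, where `ξ₁` is the first projection. -/
def resolventAt (T : V × ℝ → Set V) (lam : ℝ) (v : V) : Set (V × ℝ) :=
  {p | ∃ w ∈ T p, v = p.1 + lam • w}

theorem mem_resolventAt_iff {T : V × ℝ → Set V} {lam : ℝ} (hlam : lam ≠ 0) {v : V} {p : V × ℝ} :
    p ∈ resolventAt T lam v ↔ lam⁻¹ • (v - p.1) ∈ T p := by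
  constructor
  · rintro ⟨w, hw, rfl⟩
    rwa [add_sub_cancel_left, inv_smul_smul₀ hlam]
  · intro h
    exact ⟨_, h, by rw [smul_inv_smul₀ hlam, add_sub_cancel]⟩

variable [FiniteDimensional ℝ V] {ω : V →L[ℝ] V →L[ℝ] ℝ} {T : V × ℝ → Set V}

namespace MaximalMonotoneOnPlanes

theorem isClosed_resolventAt (hω : IsSymplectic ω) (hT : MaximalMonotoneOnPlanes ω T)
    (hdom : ∀ p, (T p).Nonempty) {lam : ℝ} (hlam : lam ≠ 0) (v : V) :
    IsClosed (resolventAt T lam v) := by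
  rw [← isOpen_compl_iff, isOpen_iff_mem_nhds]
  intro p hp
  rw [Set.mem_compl_iff, mem_resolventAt_iff hlam] at hp
  obtain ⟨c, hc⟩ := hT.exists_eventually_inner_sub_pos hω hdom
    (g := fun q => lam⁻¹ • (v - q.1)) (by fun_prop) hp
  filter_upwards [hc] with q hq hmem
  simpa using hq _ ((mem_resolventAt_iff hlam).1 hmem)

theorem horizontalPlane_inter_resolventAt_nonempty (hω : IsSymplectic ω)
    (hT : MaximalMonotoneOnPlanes ω T) (hdom : ∀ p, (T p).Nonempty) {lam : ℝ} (hlam : 0 < lam)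
    (v : V) (p : V × ℝ) : (horizontalPlane ω p ∩ resolventAt T lam v).Nonempty := by
  let P : V → V × ℝ := fun y => horizontalShift ω p (y - p.1)
  have hP : Continuous P := by fun_prop
  have hPfst (y : V) : (P y).1 = y := add_sub_cancel p.1 y
  let g : V × ℝ → V := fun q => lam⁻¹ • (v - q.1)
  obtain ⟨w₀, hw₀⟩ := hdom p
  have hfar (y : V) (hy : lam * ‖w₀ - g p‖ + 1 ≤ ‖y - p.1‖) (w : V) (hw : w ∈ T (P y)) :
      0 < ⟪w - g (P y), y - p.1⟫ := by
    have hmono := hT.1 _ _ (hω.mem_horizontalPlane_comm.1 (hω.horizontalShift_mem p (y - p.1)))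
      w hw w₀ hw₀
    have hpos : 0 < ⟪w₀ - g p + lam⁻¹ • (y - p.1), y - p.1⟫ :=
      inner_add_inv_smul_pos hlam ((lt_add_one _).trans_le hy)
    have hsplit : w - g (P y) = (w - w₀) + (w₀ - g p + lam⁻¹ • (y - p.1)) := by
      simp only [g, hPfst]
      module
    rw [hsplit, inner_add_left]
    exact add_pos_of_nonneg_of_pos (by simpa only [P, hPfst] using hmono) hpos
  obtain ⟨y, hy⟩ := exists_forall_frequently_exists_inner_nonpos
    (F := fun y => (fun w => w - g (P y)) '' T (P y)) (fun y => (hdom (P y)).image _) p.1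
    fun y hy => Set.forall_mem_image.2 (hfar y hy)
  refine ⟨P y, hω.horizontalShift_mem p _, (mem_resolventAt_iff hlam.ne').2 ?_⟩
  by_contra hPy
  obtain ⟨c, hc⟩ := hT.exists_eventually_inner_sub_pos hω hdom (g := g) (by fun_prop) hPy
  obtain ⟨x, ⟨_, ⟨w, hw, rfl⟩, hle⟩, hpos⟩ :=
    ((hy c).and_eventually (hP.continuousAt.eventually hc)).exists
  exact ((hPfst x ▸ hpos w hw).trans_le hle).false

end MaximalMonotoneOnPlanes

theorem resolvent_closed_unbounded_general (hω : IsSymplectic ω)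
    (hT : MaximalMonotoneOnPlanes ω T) (hdom : ∀ p, (T p).Nonempty) {lam : ℝ} (hlam : 0 < lam)
    (v : V) :
    IsClosed (resolventAt T lam v) ∧ (¬ ∃ R, ∀ p ∈ resolventAt T lam v, koranyiGauge p ≤ R) ∧
      ∀ p, (horizontalPlane ω p ∩ resolventAt T lam v).Nonempty := by
  refine ⟨hT.isClosed_resolventAt hω hdom hlam.ne' v, ?_,
    hT.horizontalPlane_inter_resolventAt_nonempty hω hdom hlam v⟩
  rintro ⟨R, hR⟩
  obtain ⟨p, hp, hpres⟩ := hT.horizontalPlane_inter_resolventAt_nonempty hω hdom hlam v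
    (0, R ^ 2 + 1)
  have hheight : p.2 = R ^ 2 + 1 := by
    simpa [mem_horizontalPlane, verticalGap, sub_eq_zero] using hp
  have hle : koranyiGauge p ^ 2 ≤ R ^ 2 :=
    pow_le_pow_left₀ (Real.rpow_nonneg (by positivity) _) (hR p hpres) 2
  linarith [le_abs_self p.2, abs_snd_le_koranyiGauge_sq p]

end Resolvent

section Coordinates

/-- The identification of the coordinates `(x, y, t)` on `ℍⁿ` with the model `V × ℝ` of the
Heisenberg group for `V = V₁`. -/
def heisHomeomorph (n : ℕ) : Heis n ≃ₜ V1 n × ℝ :=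
  (Homeomorph.prodAssoc (E n) (E n) ℝ).symm.trans
    ((WithLp.homeomorphProd 2 (E n) (E n)).symm.prodCongr (Homeomorph.refl ℝ))

/-- The standard symplectic form `ω (x, y) (x', y') = ⟪y, x'⟫ - ⟪x, y'⟫` on `V₁ ≅ ℝ²ⁿ`, with the
sign for which the Heisenberg law of `V₁ × ℝ` is that of `ℍⁿ`. -/
def stdSymplectic (n : ℕ) : V1 n →L[ℝ] V1 n →L[ℝ] ℝ :=
  (innerSL ℝ).bilinearComp (WithLp.sndL 2 ℝ (E n) (E n)) (WithLp.fstL 2 ℝ (E n) (E n)) -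
    (innerSL ℝ).bilinearComp (WithLp.fstL 2 ℝ (E n) (E n)) (WithLp.sndL 2 ℝ (E n) (E n))

variable {n : ℕ}

theorem stdSymplectic_apply (z z' : V1 n) :
    stdSymplectic n z z' = ⟪z.snd, z'.fst⟫ - ⟪z.fst, z'.snd⟫ := by
  simp [stdSymplectic]

theorem heisHomeomorph_fst (η : Heis n) : (heisHomeomorph n η).1 = xi1 η := rfl

theorem heisHomeomorph_snd (η : Heis n) : (heisHomeomorph n η).2 = η.2.2 := rfl

theorem isSymplectic_stdSymplectic : IsSymplectic (stdSymplectic n) where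
  self_eq_zero z := by rw [stdSymplectic_apply, real_inner_comm, sub_self]
  exists_ne_zero z hz := by
    let J : V1 n := WithLp.toLp 2 (z.snd, -z.fst)
    have hJ : stdSymplectic n z J = ⟪z, z⟫ := by
      simp [stdSymplectic_apply, J, WithLp.prod_norm_sq_eq_of_L2, add_comm]
    exact ⟨J, hJ ▸ inner_self_ne_zero.2 hz⟩

theorem heisHomeomorph_mem_horizontalPlane {η η' : Heis n} :
    heisHomeomorph n η' ∈ horizontalPlane (stdSymplectic n) (heisHomeomorph n η) ↔
      η' ∈ Hplane η := by
  rw [mem_horizontalPlane, verticalGap, stdSymplectic_apply, sub_sub, sub_eq_zero]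
  rfl

theorem heisHomeomorph_mem_resolventAt {T : Heis n → Set (V1 n)} {lam : ℝ} {v : V1 n}
    {η : Heis n} :
    heisHomeomorph n η ∈ resolventAt (T ∘ (heisHomeomorph n).symm) lam v ↔
      η ∈ resolventQ T lam v := by
  simp only [resolventAt, resolventQ, Function.comp_apply, Set.mem_ofPred_eq,
    Homeomorph.symm_apply_apply, heisHomeomorph_fst]

theorem IsMaximalHMonotone.maximalMonotoneOnPlanes {T : Heis n → Set (V1 n)}
    (hT : IsMaximalHMonotone T) :
    MaximalMonotoneOnPlanes (stdSymplectic n) (T ∘ (heisHomeomorph n).symm) := by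
  simp only [MaximalMonotoneOnPlanes, MonotoneOnPlanes, (heisHomeomorph n).surjective.forall,
    heisHomeomorph_mem_horizontalPlane, Function.comp_apply, Homeomorph.symm_apply_apply]
  exact hT

theorem dH_zero_left (η : Heis n) : dH (0, 0, 0) η = koranyiGauge (heisHomeomorph n η) := by
  simp [dH, gaugeN, hmul, hinv, koranyiGauge, heisHomeomorph_fst, heisHomeomorph_snd, xi1,
    WithLp.prod_norm_sq_eq_of_L2]

end Coordinates

/-- Remark 4.1: for a maximal H-monotone map with full domain, every resolventQ value
Q_λ(v) is closed, unbounded, and meets every horizontal plane. -/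
theorem resolvent_closed_unbounded {n : ℕ} (hn : 1 ≤ n)
    (T : Heis n → Set (V1 n)) (hT : IsMaximalHMonotone T)
    (hdom : ∀ η, (T η).Nonempty) (lam : ℝ) (hlam : 0 < lam) :
    ∀ v : V1 n,
      IsClosed (resolventQ T lam v) ∧
      (¬ ∃ R : ℝ, ∀ η ∈ resolventQ T lam v, dH ((0, 0, 0) : Heis n) η ≤ R) ∧
      (∀ η : Heis n, (Hplane η ∩ resolventQ T lam v).Nonempty) := by
  intro v
  obtain ⟨hclosed, hunbounded, hmeets⟩ := resolvent_closed_unbounded_general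
    isSymplectic_stdSymplectic hT.maximalMonotoneOnPlanes (fun p => hdom _) hlam v
  simp only [(heisHomeomorph n).surjective.forall, heisHomeomorph_mem_resolventAt, ← dH_zero_left]
    at hunbounded
  refine ⟨?_, hunbounded, fun η => ?_⟩
  · convert hclosed.preimage (heisHomeomorph n).continuous using 1
    exact Set.ext fun η => heisHomeomorph_mem_resolventAt.symm
  · obtain ⟨η', hη'⟩ := (heisHomeomorph n).surjective.exists.1 (hmeets (heisHomeomorph n η))
    exact ⟨η', heisHomeomorph_mem_horizontalPlane.1 hη'.1, heisHomeomorph_mem_resolventAt.1 hη'.2⟩
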